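/- Let N ≥ 2 and let e ∈ ℝ^N be the all-ones vector. For every y ∈ ℝ^N with eᵀy = 0 (i.e., the entries of y sum to 0), there exists a unique x ∈ ℝ^N such that eᵀx = 0 and (S_N * T_N) x = y. -/

import Mathlib

open Matrix

/-- The `N × N` tridiagonal matrix with `2` on the diagonal and `-1` on the
sub- and superdiagonals. -/
noncomputable def Tmat (N : ℕ) : Matrix (Fin N) (Fin N) ℝ :=
  Matrix.of fun i j =>
    if i = j then 2
    else if i.val + 1 = j.val ∨ j.val + 1 = i.val then -1 else 0

/-- The `N × N` matrix equal to `Tmat N` except that the `(1,1)` and `(N,N)` entries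
are `1` instead of `2`. -/
noncomputable def Smat (N : ℕ) : Matrix (Fin N) (Fin N) ℝ :=
  Matrix.of fun i j =>
    if i = j then (if i.val = 0 ∨ i.val = N - 1 then 1 else 2)
    else if i.val + 1 = j.val ∨ j.val + 1 = i.val then -1 else 0

/-!
`S_N` is the Laplacian of the path on `N` vertices, and `T_N` is that Laplacian plus the indicator
of the two endpoints on the diagonal. Since the path is connected, the symmetric matrix `S_N` has
kernel `ℝ e` and range inside `e^⊥`, while `T_N` is positive definite. If `eᵀx = 0` and
`S_N T_N x = 0`, then `T_N x = c e`, so `xᵀ T_N x = c xᵀe = 0` and `x = 0`. Thus `S_N T_N` is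
injective on the finite-dimensional space `e^⊥`, which it maps to itself, so it is bijective there.
-/

section DefiniteFactor

variable {n : Type*} [Fintype n]

theorem eq_zero_of_mul_mulVec_eq_zero {R : Type*} [CommSemiring R] {A B : Matrix n n R}
    {v : n → R} (hker : ∀ z, A *ᵥ z = 0 → ∃ c : R, z = c • v)
    (hB : ∀ x, x ⬝ᵥ B *ᵥ x = 0 → x = 0) {x : n → R} (hvx : v ⬝ᵥ x = 0)
    (hx : (A * B) *ᵥ x = 0) : x = 0 := by
  obtain ⟨c, hc⟩ := hker (B *ᵥ x) (by rw [mulVec_mulVec, hx])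
  apply hB
  rw [hc, dotProduct_smul, dotProduct_comm, hvx, smul_zero]

theorem existsUnique_mul_mulVec_eq {K : Type*} [Field K] {A B : Matrix n n K} {v : n → K}
    (hvA : v ᵥ* A = 0) (hker : ∀ z, A *ᵥ z = 0 → ∃ c : K, z = c • v)
    (hB : ∀ x, x ⬝ᵥ B *ᵥ x = 0 → x = 0) {y : n → K} (hy : v ⬝ᵥ y = 0) :
    ∃! x, v ⬝ᵥ x = 0 ∧ (A * B) *ᵥ x = y := by
  let p : Submodule K (n → K) := LinearMap.ker (dotProductBilin K K v)
  have hmaps : ∀ x ∈ p, (A * B).mulVecLin x ∈ p := fun x _ ↦ by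
    change v ⬝ᵥ (A * B) *ᵥ x = 0
    rw [← mulVec_mulVec, dotProduct_mulVec, hvA, zero_dotProduct]
  have hinj : Set.InjOn (A * B).mulVecLin p := fun x hx x' hx' h ↦
    sub_eq_zero.mp <| eq_zero_of_mul_mulVec_eq_zero hker hB (p.sub_mem hx hx') <| by
      rw [mulVec_sub, sub_eq_zero]
      exact h
  obtain ⟨x, hx, hxy⟩ := (LinearMap.injOn_iff_surjOn hmaps).mp hinj hy
  exact ⟨x, ⟨hx, hxy⟩, fun x' ⟨hx', hx'y⟩ ↦ hinj hx' hx (hx'y.trans hxy.symm)⟩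

end DefiniteFactor

section ConnectedGraph

open SimpleGraph

variable {V : Type*} [Fintype V] [DecidableEq V] {G : SimpleGraph V} [DecidableRel G.Adj]

theorem lapMatrix_mulVec_eq_zero_iff_forall_eq (hG : G.Preconnected) {x : V → ℝ} :
    G.lapMatrix ℝ *ᵥ x = 0 ↔ ∀ i j, x i = x j := by
  simp only [lapMatrix_mulVec_eq_zero_iff_forall_reachable, hG _ _, true_imp_iff]

theorem posDef_lapMatrix_add_diagonal (hG : G.Preconnected) {d : V → ℝ} (hd : 0 < d) :
    (G.lapMatrix ℝ + diagonal d).PosDef := by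
  have hL : (G.lapMatrix ℝ).PosSemidef := G.posSemidef_lapMatrix ℝ
  have hD : (diagonal d).PosSemidef := .diagonal hd.le
  refine .of_dotProduct_mulVec_pos (hL.add hD).isHermitian fun x hx ↦
    ((hL.add hD).dotProduct_mulVec_nonneg x).lt_of_ne' fun hform ↦ hx ?_
  rw [add_mulVec, dotProduct_add, add_eq_zero_iff_of_nonneg (hL.dotProduct_mulVec_nonneg x)
    (hD.dotProduct_mulVec_nonneg x), hL.dotProduct_mulVec_zero_iff,
    hD.dotProduct_mulVec_zero_iff] at hform
  obtain ⟨hLx, hDx⟩ := hform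
  obtain ⟨-, i, hdi⟩ := Pi.lt_def.mp hd
  have hdxi : d i * x i = 0 := by
    rw [← mulVec_diagonal, hDx, Pi.zero_apply]
  have hxi : x i = 0 := (mul_eq_zero.mp hdxi).resolve_left hdi.ne'
  exact funext fun j ↦ ((lapMatrix_mulVec_eq_zero_iff_forall_eq hG).mp hLx j i).trans hxi

theorem existsUnique_lapMatrix_mul_mulVec_eq (hG : G.Preconnected) {B : Matrix V V ℝ}
    (hB : B.PosDef) {y : V → ℝ} (hy : (fun _ ↦ 1) ⬝ᵥ y = 0) :
    ∃! x : V → ℝ, (fun _ ↦ 1) ⬝ᵥ x = 0 ∧ (G.lapMatrix ℝ * B) *ᵥ x = y := by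
  have hones : (fun _ ↦ 1) ᵥ* G.lapMatrix ℝ = 0 := by
    rw [← mulVec_transpose, G.isSymm_lapMatrix ℝ, lapMatrix_mulVec_const_eq_zero]
  have hker (z : V → ℝ) (hz : G.lapMatrix ℝ *ᵥ z = 0) : ∃ c : ℝ, z = c • fun _ ↦ 1 := by
    rcases isEmpty_or_nonempty V with _ | ⟨⟨i⟩⟩
    · exact ⟨0, Subsingleton.elim _ _⟩
    · refine ⟨z i, funext fun j ↦ ?_⟩
      rw [Pi.smul_apply, smul_eq_mul, mul_one]
      exact (lapMatrix_mulVec_eq_zero_iff_forall_eq hG).mp hz j i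
  have hdef (x : V → ℝ) (hx : x ⬝ᵥ B *ᵥ x = 0) : x = 0 := by
    by_contra hne
    exact (hB.dotProduct_mulVec_pos hne).ne' hx
  exact existsUnique_mul_mulVec_eq hones hker hdef hy

end ConnectedGraph

section Path

open SimpleGraph

theorem degree_pathGraph {N : ℕ} [DecidableRel (pathGraph N).Adj] (hN : 2 ≤ N) (i : Fin N) :
    (pathGraph N).degree i = if i.val = 0 ∨ i.val = N - 1 then 1 else 2 := by
  split_ifs with hi
  · rw [degree_eq_one_iff_existsUnique_adj]
    simp only [pathGraph_adj]
    rcases hi with hi | hi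
    · exact ⟨⟨1, hN⟩, by grind⟩
    · exact ⟨⟨N - 2, by lia⟩, by grind⟩
  · have hnbr : (pathGraph N).neighborFinset i = {⟨i - 1, by lia⟩, ⟨i + 1, by lia⟩} := by
      ext j
      simp only [mem_neighborFinset, pathGraph_adj, Finset.mem_insert, Finset.mem_singleton,
        Fin.ext_iff]
      lia
    rw [← card_neighborFinset_eq_degree, hnbr, Finset.card_pair (by simp [Fin.ext_iff])]

theorem Smat_eq_lapMatrix {N : ℕ} [DecidableRel (pathGraph N).Adj] (hN : 2 ≤ N) :
    Smat N = (pathGraph N).lapMatrix ℝ := by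
  ext i j
  simp only [Smat, of_apply, lapMatrix, degMatrix, Matrix.sub_apply, diagonal_apply,
    adjMatrix_apply, pathGraph_adj, degree_pathGraph hN, Nat.cast_ite, Nat.cast_one, Nat.cast_ofNat]
  grind

theorem Tmat_eq_Smat_add_diagonal (N : ℕ) :
    Tmat N = Smat N + diagonal fun i ↦ if i.val = 0 ∨ i.val = N - 1 then 1 else 0 := by
  ext i j
  simp only [Tmat, Smat, of_apply, Matrix.add_apply, diagonal_apply]
  grind

theorem posDef_Tmat {N : ℕ} (hN : 2 ≤ N) : (Tmat N).PosDef := by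
  classical
  rw [Tmat_eq_Smat_add_diagonal, Smat_eq_lapMatrix hN]
  refine posDef_lapMatrix_add_diagonal (pathGraph_preconnected N) (Pi.lt_def.mpr ⟨fun i ↦ ?_, ?_⟩)
  · dsimp only [Pi.zero_apply]
    positivity
  · exact ⟨⟨0, by lia⟩, by simp⟩

end Path

/-- For every `y` orthogonal to the all-ones vector `e`, there is a unique `x`
orthogonal to `e` with `(S_N T_N) x = y`. -/
theorem SmatTmat_restricted_invertible (N : ℕ) (hN : 2 ≤ N) :
    ∀ y : Fin N → ℝ, (fun _ => (1 : ℝ)) ⬝ᵥ y = 0 →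
      ∃! x : Fin N → ℝ,
        (fun _ => (1 : ℝ)) ⬝ᵥ x = 0 ∧ (Smat N * Tmat N).mulVec x = y := by
  classical
  intro y hy
  rw [Smat_eq_lapMatrix hN]
  exact existsUnique_lapMatrix_mul_mulVec_eq (SimpleGraph.pathGraph_preconnected N)
    (posDef_Tmat hN) hy
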